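/- (Theorem H_d) Assume F_k(x) = V_k D_k(x) V_k^{-1} with D_k(x) block diagonal with blocks A_k(x) ∈ ℝ^{p×p}, B_k(x) ∈ ℝ^{q×q}; assume ∑_{i=1}^∞ ‖[A_k^i(x)]^{-1}‖₂ ≤ α_k, ∑_{i=0}^{n−1} ‖B_k^i(f_k^{n−i}(x))‖₂ ≤ β_k for all n, and ‖∂f_k/∂k‖₂ ≤ M. Then for every N ≥ 1 the largest eigenvalue of the covariance matrix Γ̃_N(x,k) satisfies λ̃_N^{(d+1)}(x,k) ≥ (‖V_k^{(p)}L(x,k)‖₂² + 1) / ((M‖V_k‖₂‖V_k^{-1}‖₂)²(α_k² + β_k²)(N+1)). -/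

import Mathlib

open Matrix

/-- The operator norm on real matrices induced by the Euclidean (ℓ²) norm. -/
noncomputable def opNorm {n : Type*} [Fintype n] [DecidableEq n]
    (P : Matrix n n ℝ) : ℝ :=
  ‖(Matrix.toEuclideanCLM (𝕜 := ℝ) P : EuclideanSpace ℝ n →L[ℝ] EuclideanSpace ℝ n)‖

/-- The Euclidean norm of a vector. -/
noncomputable def vnorm {n : Type*} [Fintype n] (v : n → ℝ) : ℝ :=
  Real.sqrt (∑ i, v i ^ 2)

/-- The Jacobian cocycle `F_k^n(x)`: the product of the one-step Jacobians `F = F_k`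
along the orbit of `x` under `f = f_k`, latest on the left. -/
def jacCoc {X : Type*} {n : Type*} [Fintype n] [DecidableEq n]
    (F : X → Matrix n n ℝ) (f : X → X) (x : X) : ℕ → Matrix n n ℝ
  | 0 => 1
  | (m + 1) => F (f^[m] x) * jacCoc F f x m

/-- The derivative `∂f_k^n/∂k(x)`, defined by the recursion
`∂f_k^{n+1}/∂k(x) = F_k(f_k^n(x)) ∂f_k^n/∂k(x) + ∂f_k/∂k(f_k^n(x))`; equivalently
`∂f_k^n/∂k(x) = ∑_{i=0}^{n-1} F_k^i(f_k^{n-i}(x)) ∂f_k/∂k(f_k^{n-1-i}(x))`. -/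
def parDer {X : Type*} {n : Type*} [Fintype n] [DecidableEq n]
    (F : X → Matrix n n ℝ) (f : X → X) (w : X → n → ℝ) (x : X) : ℕ → n → ℝ
  | 0 => 0
  | (m + 1) => (F (f^[m] x)).mulVec (parDer F f w x m) + w (f^[m] x)

/-- The augmented Jacobian `F̃_k^n(x) = [F_k^n(x) | ∂f_k^n/∂k(x)]`. -/
def augment {n : Type*} (F : Matrix n n ℝ) (w : n → ℝ) : Matrix n (n ⊕ Unit) ℝ :=
  Matrix.of fun i j => Sum.elim (fun j' => F i j') (fun _ => w i) j

/-- The normal matrix `C̃_N(x,k) = ∑_{n=0}^N F̃_k^n(x)ᵀ F̃_k^n(x)`. -/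
noncomputable def normalMatrix {X : Type*} {n : Type*} [Fintype n] [DecidableEq n]
    (F : X → Matrix n n ℝ) (f : X → X) (w : X → n → ℝ) (x : X) (N : ℕ) :
    Matrix (n ⊕ Unit) (n ⊕ Unit) ℝ :=
  ∑ m ∈ Finset.range (N + 1),
    (augment (jacCoc F f x m) (parDer F f w x m))ᵀ * augment (jacCoc F f x m) (parDer F f w x m)

/-- The two-parameter cocycle `twoCoc G m i = A_k^i(f_k^m(x))` built from the one-step
matrices `G j = A_k(f_k^j(x))`, latest on the left. -/
def twoCoc {n : Type*} [Fintype n] [DecidableEq n] (G : ℕ → Matrix n n ℝ) :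
    ℕ → ℕ → Matrix n n ℝ
  | _, 0 => 1
  | m, (i + 1) => G (m + i) * twoCoc G m i

lemma vnorm_eq {n : Type*} [Fintype n] (v : n → ℝ) : vnorm v = ‖WithLp.toLp 2 v‖ := by
  simp [vnorm, EuclideanSpace.norm_eq]

lemma vnorm_nonneg {n : Type*} [Fintype n] (v : n → ℝ) : 0 ≤ vnorm v := Real.sqrt_nonneg _

lemma opNorm_nonneg {n : Type*} [Fintype n] [DecidableEq n] (P : Matrix n n ℝ) :
    0 ≤ opNorm P := norm_nonneg _

lemma vnorm_sq {n : Type*} [Fintype n] (v : n → ℝ) : vnorm v ^ 2 = ∑ i, v i ^ 2 :=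
  Real.sq_sqrt (Finset.sum_nonneg fun _ _ => sq_nonneg _)

lemma vnorm_neg {n : Type*} [Fintype n] (v : n → ℝ) : vnorm (-v) = vnorm v := by
  simp [vnorm]

lemma vnorm_mulVec_le {n : Type*} [Fintype n] [DecidableEq n] (P : Matrix n n ℝ) (v : n → ℝ) :
    vnorm (P *ᵥ v) ≤ opNorm P * vnorm v := by
  have := (Matrix.toEuclideanCLM (𝕜 := ℝ) P).le_opNorm (WithLp.toLp 2 v)
  rw [vnorm_eq, vnorm_eq]
  simpa [opNorm] using this

lemma vnorm_sum_le {n : Type*} [Fintype n] {ι : Type*} (s : Finset ι) (g : ι → n → ℝ) :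
    vnorm (∑ i ∈ s, g i) ≤ ∑ i ∈ s, vnorm (g i) := by
  simp only [vnorm_eq]
  rw [WithLp.toLp_sum]
  exact norm_sum_le _ _

lemma vnorm_sum_mulVec_le {n : Type*} [Fintype n] [DecidableEq n] (k : ℕ)
    (P : ℕ → Matrix n n ℝ) (g : ℕ → n → ℝ) (c b : ℝ) (hc : ∀ i, vnorm (g i) ≤ c)
    (hb : ∑ i ∈ Finset.range k, opNorm (P i) ≤ b) :
    vnorm (∑ i ∈ Finset.range k, P i *ᵥ g i) ≤ b * c := by
  have hc0 : 0 ≤ c := (vnorm_nonneg _).trans (hc 0)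
  calc _ ≤ ∑ i ∈ Finset.range k, vnorm (P i *ᵥ g i) := vnorm_sum_le _ _
    _ ≤ ∑ i ∈ Finset.range k, opNorm (P i) * c := Finset.sum_le_sum fun i _ =>
        (vnorm_mulVec_le _ _).trans (mul_le_mul_of_nonneg_left (hc i) (opNorm_nonneg _))
    _ = (∑ i ∈ Finset.range k, opNorm (P i)) * c := by rw [Finset.sum_mul]
    _ ≤ _ := mul_le_mul_of_nonneg_right hb hc0

lemma twoCoc_add {n : Type*} [Fintype n] [DecidableEq n] (G : ℕ → Matrix n n ℝ) (m j : ℕ) :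
    twoCoc G 0 (m + j) = twoCoc G m j * twoCoc G 0 m := by
  induction j with
  | zero => simp [twoCoc]
  | succ j ih => rw [← add_assoc]; simp [twoCoc, ih, Matrix.mul_assoc]

lemma stable_bound {n : Type*} [Fintype n] [DecidableEq n] (G : ℕ → Matrix n n ℝ)
    (g s : ℕ → n → ℝ) (c b : ℝ) (h0 : s 0 = 0) (hs : ∀ m, s (m + 1) = G m *ᵥ s m + g m)
    (hc : ∀ i, vnorm (g i) ≤ c)
    (hb : ∀ m, ∑ i ∈ Finset.range m, opNorm (twoCoc G (m - i) i) ≤ b) (m : ℕ) :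
    vnorm (s m) ≤ b * c := by
  have key : ∀ m, s m = ∑ i ∈ Finset.range m, twoCoc G (m - i) i *ᵥ g (m - 1 - i) := by
    intro m
    induction m with
    | zero => simp [h0]
    | succ m ih =>
      rw [Finset.sum_range_succ', hs, ih, Matrix.mulVec_sum]
      congr 1
      · refine Finset.sum_congr rfl fun i hi => ?_
        have hi' := Finset.mem_range.1 hi
        have e1 : m + 1 - (i + 1) = m - i := by omega
        have e2 : m + 1 - 1 - (i + 1) = m - 1 - i := by omega
        have e3 : m - i + i = m := by omega
        rw [e1, e2]
        simp [twoCoc, e3, Matrix.mulVec_mulVec]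
      · simp [twoCoc]
  rw [key]
  exact vnorm_sum_mulVec_le m _ _ c b (fun i => hc _) (hb m)

lemma summable_aux {n : Type*} [Fintype n] [DecidableEq n] (P : ℕ → Matrix n n ℝ)
    (g : ℕ → n → ℝ) (c b : ℝ) (hc : ∀ i, vnorm (g i) ≤ c)
    (hb : ∀ k, ∑ i ∈ Finset.range k, opNorm (P i) ≤ b) :
    Summable fun i => P i *ᵥ g i := by
  have h1 : Summable fun i => opNorm (P i) :=
    summable_of_sum_range_le (fun i => opNorm_nonneg _) hb
  have h2 : Summable fun i => vnorm (P i *ᵥ g i) :=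
    Summable.of_nonneg_of_le (fun i => vnorm_nonneg _)
      (fun i => (vnorm_mulVec_le _ _).trans
        (mul_le_mul_of_nonneg_left (hc i) (opNorm_nonneg _))) (h1.mul_right c)
  rw [Pi.summable]
  intro j
  refine Summable.of_norm_bounded h2 fun i => ?_
  rw [vnorm_eq]
  exact PiLp.norm_apply_le (WithLp.toLp 2 (P i *ᵥ g i)) j

lemma unstable_bound {n : Type*} [Fintype n] [DecidableEq n] (G : ℕ → Matrix n n ℝ)
    (g s : ℕ → n → ℝ) (c b : ℝ) (h0 : s 0 = 0) (hs : ∀ m, s (m + 1) = G m *ᵥ s m + g m)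
    (hc : ∀ i, vnorm (g i) ≤ c) (hu : ∀ m i, IsUnit (twoCoc G m i))
    (hb : ∀ m k, ∑ i ∈ Finset.range k, opNorm (twoCoc G m (i + 1))⁻¹ ≤ b) (m : ℕ) :
    vnorm (s m - twoCoc G 0 m *ᵥ ∑' i, (twoCoc G 0 (i + 1))⁻¹ *ᵥ g i) ≤ b * c := by
  have hdet : ∀ m i, IsUnit (twoCoc G m i).det := fun m i =>
    (Matrix.isUnit_iff_isUnit_det _).1 (hu m i)
  have key : ∀ m, s m = twoCoc G 0 m *ᵥ ∑ i ∈ Finset.range m, (twoCoc G 0 (i + 1))⁻¹ *ᵥ g i := by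
    intro m
    induction m with
    | zero => simp [h0]
    | succ m ih =>
      rw [Finset.sum_range_succ, hs, ih, Matrix.mulVec_add, Matrix.mulVec_mulVec (g m),
        Matrix.mul_nonsing_inv _ (hdet 0 (m + 1))]
      simp [twoCoc, Matrix.mulVec_mulVec]
  have hsum := summable_aux (fun i => (twoCoc G 0 (i + 1))⁻¹) g c b hc (hb 0)
  have hfin : ∀ k, s m - twoCoc G 0 m *ᵥ ∑ i ∈ Finset.range (k + m), (twoCoc G 0 (i + 1))⁻¹ *ᵥ g i
      = - ∑ j ∈ Finset.range k, (twoCoc G m (j + 1))⁻¹ *ᵥ g (m + j) := by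
    intro k
    rw [key, add_comm k m, Finset.sum_range_add, Matrix.mulVec_add, sub_add_cancel_left,
      Matrix.mulVec_sum]
    congr 1
    refine Finset.sum_congr rfl fun j _ => ?_
    rw [Matrix.mulVec_mulVec, add_assoc, twoCoc_add, Matrix.mul_inv_rev, ← Matrix.mul_assoc,
      Matrix.mul_nonsing_inv _ (hdet 0 m), Matrix.one_mul]
  have hlim := (hsum.hasSum.tendsto_sum_nat).comp (Filter.tendsto_add_atTop_nat m)
  have hcont : Continuous fun v : n → ℝ => vnorm (s m - twoCoc G 0 m *ᵥ v) := by
    unfold vnorm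
    fun_prop
  refine le_of_tendsto ((hcont.tendsto _).comp hlim) (Filter.Eventually.of_forall fun k => ?_)
  simp only [Function.comp]
  rw [hfin, vnorm_neg]
  exact vnorm_sum_mulVec_le k _ _ c b (fun i => hc _) (hb m k)

lemma exists_eig {n : Type*} [Fintype n] [DecidableEq n] (C : Matrix n n ℝ) (hC : C.PosDef)
    (u : n → ℝ) (hu : u ≠ 0) (R : ℝ) (hR : u ⬝ᵥ (C *ᵥ u) ≤ R) :
    ∃ μ : ℝ, Module.End.HasEigenvalue (Matrix.toLin' C⁻¹) μ ∧ (u ⬝ᵥ u) / R ≤ μ := by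
  have hu0 : 0 < u ⬝ᵥ u := by
    have := dotProduct_star_self_pos_iff (v := u)
    simpa using this.2 hu
  have hp : 0 < u ⬝ᵥ (C *ᵥ u) := by
    simpa using hC.dotProduct_mulVec_pos hu
  have hR0 : 0 < R := hp.trans_le hR
  set c := R / (u ⬝ᵥ u) with hc
  have hH : (C - c • (1 : Matrix n n ℝ)).IsHermitian := by
    refine hC.isHermitian.sub ?_
    simp [Matrix.IsHermitian]
  have hnot : ¬ (C - c • (1 : Matrix n n ℝ)).PosDef := by
    intro h
    have h1 := h.dotProduct_mulVec_pos hu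
    simp only [star_trivial, Matrix.sub_mulVec, Matrix.smul_mulVec, Matrix.one_mulVec,
      dotProduct_sub, dotProduct_smul, smul_eq_mul] at h1
    have : c * (u ⬝ᵥ u) = R := by rw [hc]; field_simp
    linarith
  rw [hH.posDef_iff_eigenvalues_pos] at hnot
  push Not at hnot
  obtain ⟨j, hj⟩ := hnot
  set v : n → ℝ := (hH.eigenvectorBasis j).ofLp with hv
  have hv0 : v ≠ 0 := by
    intro h
    have h2 := hH.eigenvectorBasis.orthonormal.ne_zero j
    apply h2
    ext i
    exact congrFun h i
  have hev := hH.mulVec_eigenvectorBasis j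
  rw [← hv] at hev
  set ν := hH.eigenvalues j
  have hCv : C *ᵥ v = (c + ν) • v := by
    rw [Matrix.sub_mulVec, Matrix.smul_mulVec, Matrix.one_mulVec, sub_eq_iff_eq_add] at hev
    rw [hev, add_smul, add_comm]
  have hpos : 0 < c + ν := by
    have h1 := hC.dotProduct_mulVec_pos hv0
    have hvv : 0 < v ⬝ᵥ v := by
      have := dotProduct_star_self_pos_iff (v := v)
      simpa using this.2 hv0
    rw [hCv] at h1
    simp only [star_trivial, dotProduct_smul, smul_eq_mul] at h1
    exact (pos_iff_pos_of_mul_pos h1).2 hvv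
  refine ⟨(c + ν)⁻¹, ?_, ?_⟩
  · refine Module.End.hasEigenvalue_of_hasEigenvector (x := v)
      (Module.End.hasEigenvector_iff.2 ⟨Module.End.mem_eigenspace_iff.2 ?_, hv0⟩)
    have hd : IsUnit C.det := (Matrix.isUnit_iff_isUnit_det _).1 hC.isUnit
    have h3 : C⁻¹ *ᵥ (C *ᵥ v) = v := by
      rw [Matrix.mulVec_mulVec, Matrix.nonsing_inv_mul _ hd, Matrix.one_mulVec]
    rw [hCv, Matrix.mulVec_smul] at h3
    rw [Matrix.toLin'_apply]
    rw [eq_inv_smul_iff₀ hpos.ne', h3]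
  · have : u ⬝ᵥ u / R = c⁻¹ := by rw [hc, inv_div]
    rw [this]
    exact inv_anti₀ hpos (by linarith)

lemma vnorm_sum_type {a b : Type*} [Fintype a] [Fintype b] (v : a ⊕ b → ℝ) :
    vnorm v ^ 2 = vnorm (fun i => v (Sum.inl i)) ^ 2 + vnorm (fun i => v (Sum.inr i)) ^ 2 := by
  simp [vnorm_sq, Fintype.sum_sum_type]

/-- **Theorem H_d.** Assume `F_k(y) = V_k D_k(y) V_k⁻¹` with `D_k(y)` block diagonal with
blocks `A_k(y) ∈ ℝ^{p×p}` and `B_k(y) ∈ ℝ^{q×q}`; assume `∑_{i=1}^∞ ‖[A_k^i(y)]⁻¹‖₂ ≤ α`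
along the orbit, `∑_{i=0}^{n-1} ‖B_k^i(f_k^{n-i}(x))‖₂ ≤ β` for all `n`, and
`‖∂f_k/∂k‖₂ ≤ M`. Then for every `N ≥ 1` the largest eigenvalue of the covariance matrix
`Γ̃_N(x,k) = C̃_N(x,k)⁻¹` is at least
`(‖V_k^{(p)} L(x,k)‖₂² + 1) / ((M ‖V_k‖₂ ‖V_k⁻¹‖₂)² (α² + β²) (N+1))`, where `L(x,k)` is
the limit `∑_{i=1}^∞ [A_k^i(x)]⁻¹ ω¹(f_k^{i-1}(x))` and `ω¹` is the `ℝ^p`-component of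
`V_k⁻¹ ∂f_k/∂k`. -/
theorem theorem_Hd {p q : ℕ} (M α β : ℝ) (hM0 : 0 < M) (hα0 : 0 < α) (hβ0 : 0 < β)
    (f : ((Fin p ⊕ Fin q) → ℝ) → ((Fin p ⊕ Fin q) → ℝ))
    (A : ((Fin p ⊕ Fin q) → ℝ) → Matrix (Fin p) (Fin p) ℝ)
    (B : ((Fin p ⊕ Fin q) → ℝ) → Matrix (Fin q) (Fin q) ℝ)
    (V : Matrix (Fin p ⊕ Fin q) (Fin p ⊕ Fin q) ℝ) (hV : IsUnit V)
    (F : ((Fin p ⊕ Fin q) → ℝ) → Matrix (Fin p ⊕ Fin q) (Fin p ⊕ Fin q) ℝ)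
    (hF : ∀ y, F y = V * Matrix.fromBlocks (A y) 0 0 (B y) * V⁻¹)
    (w : ((Fin p ⊕ Fin q) → ℝ) → ((Fin p ⊕ Fin q) → ℝ))
    (hM : ∀ y, vnorm (w y) ≤ M)
    (x : (Fin p ⊕ Fin q) → ℝ)
    (hAinv : ∀ m i : ℕ, IsUnit (twoCoc (fun j => A (f^[j] x)) m i))
    (hα : ∀ m mm : ℕ,
      ∑ i ∈ Finset.range mm, opNorm ((twoCoc (fun j => A (f^[j] x)) m (i + 1))⁻¹) ≤ α)
    (hβ : ∀ n : ℕ,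
      ∑ i ∈ Finset.range n, opNorm (twoCoc (fun j => B (f^[j] x)) (n - i) i) ≤ β)
    (L : Fin p → ℝ)
    (hL : L = ∑' i : ℕ, ((twoCoc (fun j => A (f^[j] x)) 0 (i + 1))⁻¹).mulVec
      (fun j' => V⁻¹.mulVec (w (f^[i] x)) (Sum.inl j')))
    (N : ℕ) (hN : 1 ≤ N)
    (hpos : (normalMatrix F f w x N).PosDef) :
    ∃ μ : ℝ, Module.End.HasEigenvalue (Matrix.toLin' (normalMatrix F f w x N)⁻¹) μ ∧
      (vnorm ((Matrix.of fun i j' => V i (Sum.inl j')).mulVec L) ^ 2 + 1) /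
        ((M * opNorm V * opNorm V⁻¹) ^ 2 * (α ^ 2 + β ^ 2) * (N + 1)) ≤ μ := by
  set G := fun j => A (f^[j] x) with hG
  set H := fun j => B (f^[j] x) with hH
  set g : ℕ → (Fin p ⊕ Fin q) → ℝ := fun i => V⁻¹ *ᵥ w (f^[i] x) with hg
  set z : ℕ → (Fin p ⊕ Fin q) → ℝ := fun m => V⁻¹ *ᵥ parDer F f w x m with hz
  have hdet : IsUnit V.det := (Matrix.isUnit_iff_isUnit_det _).1 hV
  set c := opNorm V⁻¹ * M with hc
  have hgc : ∀ i, vnorm (g i) ≤ c := fun i => (vnorm_mulVec_le _ _).trans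
    (mul_le_mul_of_nonneg_left (hM _) (opNorm_nonneg _))
  have hc0 : 0 ≤ c := (vnorm_nonneg _).trans (hgc 0)
  have hgl : ∀ i, vnorm (fun j => g i (Sum.inl j)) ≤ c := fun i => by
    refine le_trans ?_ (hgc i)
    refine (sq_le_sq₀ (vnorm_nonneg _) (vnorm_nonneg _)).1 ?_
    rw [vnorm_sum_type (g i)]
    nlinarith [sq_nonneg (vnorm fun j => g i (Sum.inr j))]
  have hgr : ∀ i, vnorm (fun j => g i (Sum.inr j)) ≤ c := fun i => by
    refine le_trans ?_ (hgc i)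
    refine (sq_le_sq₀ (vnorm_nonneg _) (vnorm_nonneg _)).1 ?_
    rw [vnorm_sum_type (g i)]
    nlinarith [sq_nonneg (vnorm fun j => g i (Sum.inl j))]
  have hz0 : z 0 = 0 := by simp [hz, parDer]
  have hzs : ∀ m, z (m + 1) = Matrix.fromBlocks (G m) 0 0 (H m) *ᵥ z m + g m := by
    intro m
    simp only [hz, hg, parDer, Matrix.mulVec_add, hF, Matrix.mulVec_mulVec, hG, hH]
    rw [← Matrix.mul_assoc, ← Matrix.mul_assoc, Matrix.nonsing_inv_mul _ hdet, Matrix.one_mul]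
  have hS := unstable_bound G (fun i j => g i (Sum.inl j)) (fun m j => z m (Sum.inl j)) c α
    (by simp only [hz0]; rfl)
    (fun m => by
      funext j
      simp [hzs, Matrix.fromBlocks_mulVec, Function.comp_def]) hgl hAinv hα
  have hT := stable_bound H (fun i j => g i (Sum.inr j)) (fun m j => z m (Sum.inr j)) c β
    (by simp only [hz0]; rfl)
    (fun m => by
      funext j
      simp [hzs, Matrix.fromBlocks_mulVec, Function.comp_def]) hgr hβ
  rw [← hL] at hS
  set y : (Fin p ⊕ Fin q) → ℝ := (Matrix.of fun i j' => V i (Sum.inl j')) *ᵥ L with hy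
  have hyV : y = V *ᵥ Sum.elim L 0 := by
    funext i
    simp [hy, Matrix.mulVec, dotProduct, Fintype.sum_sum_type]
  have hjac : ∀ m, jacCoc F f x m *ᵥ y = V *ᵥ Sum.elim (twoCoc G 0 m *ᵥ L) 0 := by
    intro m
    induction m with
    | zero => simp [jacCoc, twoCoc, hyV]
    | succ m ih =>
      rw [jacCoc, ← Matrix.mulVec_mulVec, ih, hF, Matrix.mulVec_mulVec, Matrix.mul_assoc,
        Matrix.nonsing_inv_mul _ hdet, Matrix.mul_one, ← Matrix.mulVec_mulVec,
        Matrix.fromBlocks_mulVec]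
      congr 1
      simp [twoCoc, Matrix.mulVec_mulVec, hG]
  set u : (Fin p ⊕ Fin q) ⊕ Unit → ℝ := Sum.elim (-y) (fun _ => 1) with hu
  have hu0 : u ≠ 0 := fun h => by
    have := congrFun h (Sum.inr ())
    simp [hu] at this
  have huu : u ⬝ᵥ u = vnorm y ^ 2 + 1 := by
    rw [vnorm_sq]
    simp [hu, dotProduct, Fintype.sum_sum_type, sq]
  have haug : ∀ m, augment (jacCoc F f x m) (parDer F f w x m) *ᵥ u =
      V *ᵥ (z m - Sum.elim (twoCoc G 0 m *ᵥ L) 0) := by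
    intro m
    have h1 : V *ᵥ z m = parDer F f w x m := by
      rw [hz, Matrix.mulVec_mulVec, Matrix.mul_nonsing_inv _ hdet, Matrix.one_mulVec]
    rw [Matrix.mulVec_sub, h1, ← hjac]
    funext i
    simp [augment, hu, Matrix.mulVec, dotProduct, Fintype.sum_sum_type]
    ring
  have hbound : ∀ m, vnorm (augment (jacCoc F f x m) (parDer F f w x m) *ᵥ u) ^ 2 ≤
      (M * opNorm V * opNorm V⁻¹) ^ 2 * (α ^ 2 + β ^ 2) := by
    intro m
    rw [haug]
    have h1 := vnorm_mulVec_le V (z m - Sum.elim (twoCoc G 0 m *ᵥ L) 0)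
    have h2 : vnorm (z m - Sum.elim (twoCoc G 0 m *ᵥ L) 0) ^ 2 ≤ (α * c) ^ 2 + (β * c) ^ 2 := by
      rw [vnorm_sum_type]
      refine add_le_add (pow_le_pow_left₀ (vnorm_nonneg _) ?_ 2)
        (pow_le_pow_left₀ (vnorm_nonneg _) ?_ 2)
      · exact hS m
      · simpa using hT m
    calc _ ≤ (opNorm V * vnorm (z m - Sum.elim (twoCoc G 0 m *ᵥ L) 0)) ^ 2 :=
          pow_le_pow_left₀ (vnorm_nonneg _) h1 2
      _ = opNorm V ^ 2 * vnorm (z m - Sum.elim (twoCoc G 0 m *ᵥ L) 0) ^ 2 := by ring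
      _ ≤ opNorm V ^ 2 * ((α * c) ^ 2 + (β * c) ^ 2) :=
          mul_le_mul_of_nonneg_left h2 (sq_nonneg _)
      _ = _ := by rw [hc]; ring
  have hR : u ⬝ᵥ (normalMatrix F f w x N *ᵥ u) ≤
      (M * opNorm V * opNorm V⁻¹) ^ 2 * (α ^ 2 + β ^ 2) * (N + 1) := by
    have h1 : u ⬝ᵥ (normalMatrix F f w x N *ᵥ u) = ∑ m ∈ Finset.range (N + 1),
        vnorm (augment (jacCoc F f x m) (parDer F f w x m) *ᵥ u) ^ 2 := by
      rw [normalMatrix, Matrix.sum_mulVec, dotProduct_sum]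
      refine Finset.sum_congr rfl fun m _ => ?_
      rw [← Matrix.mulVec_mulVec, Matrix.dotProduct_mulVec, Matrix.vecMul_transpose, vnorm_sq]
      simp [dotProduct, sq]
    rw [h1]
    refine (Finset.sum_le_sum fun m _ => hbound m).trans (le_of_eq ?_)
    simp
    ring
  rw [← huu]
  exact exists_eig _ hpos u hu0 _ hR
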